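/- Let (M, p) be a resolution datum of size r, with c i = 2·(p i) - 2 - M i i. Then for every nonzero vector d : Fin r → ℤ with d i ≥ 0 for all i, one has -cᵀ M⁻¹ c ≥ 2·dᵀ M d + 2·cᵀ d + 1; that is, -cᵀ M⁻¹ c ≥ 4·p_a(d) - 3 where p_a(d) = 1 + (dᵀ M d + cᵀ d)/2. -/

import Mathlib

open Matrix

structure ResolutionDatum (r : ℕ) where
  M : Matrix (Fin r) (Fin r) ℤ
  p : Fin r → ℕ
  symm : M.IsSymm
  negdef : ∀ x : Fin r → ℝ, x ≠ 0 → x ⬝ᵥ ((M.map (Int.cast : ℤ → ℝ)) *ᵥ x) < 0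
  offdiag_nonneg : ∀ i j : Fin r, i ≠ j → 0 ≤ M i j
  diag_le_neg_two : ∀ i : Fin r, p i = 0 → M i i ≤ -2
  connected : (SimpleGraph.fromRel (fun i j : Fin r => 0 < M i j)).Connected

/-- The vector `c i = 2 p i - 2 - M i i` (the values `K · A_i`). -/
def ResolutionDatum.c {r : ℕ} (D : ResolutionDatum r) : Fin r → ℚ :=
  fun i => 2 * (D.p i : ℚ) - 2 - (D.M i i : ℚ)

/-- `-K² = -cᵀ M⁻¹ c`. -/
noncomputable def ResolutionDatum.negK2 {r : ℕ} (D : ResolutionDatum r) : ℚ :=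
  - (D.c ⬝ᵥ ((D.M.map (Int.cast : ℤ → ℚ))⁻¹ *ᵥ D.c))

/-- The set of all values `-K²` of normal surface singularities. -/
def negK2Set : Set ℝ :=
  { x : ℝ | ∃ (r : ℕ) (_ : 0 < r) (D : ResolutionDatum r), x = (D.negK2 : ℝ) }

/-- The integer vector `c i = 2 p i - 2 - M i i`. -/
def ResolutionDatum.cInt {r : ℕ} (D : ResolutionDatum r) : Fin r → ℤ :=
  fun i => 2 * (D.p i : ℤ) - 2 - D.M i i

/-! Negative semidefiniteness gives `(K + D)² ≤ 0`, that is `-K² ≥ 2 K·D + D²`. Since `D²` is a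
negative integer, `-D² ≥ 1`, so `-K² ≥ 2 K·D + 2 D² + 1 = 4 p_a(D) - 3`. Here `K` is the rational
cycle `M⁻¹ c`, determined by the adjunction equations `K·A_i = c_i`.
-/

section SymmetricForm

variable {n R S : Type*}

theorem posDef_of_posDef_map [Ring R] [LinearOrder R] [StarRing R] [TrivialStar R]
    [Ring S] [PartialOrder S] [StarRing S] [TrivialStar S] {f : R →+* S} (hf : StrictMono f)
    {A : Matrix n n R} (hA : (A.map f).PosDef) : A.PosDef := by
  have hsymm : A.IsHermitian :=
    isHermitian_iff_isSymm.mpr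
      ((isSymm_map_iff hf.injective).mp (isHermitian_iff_isSymm.mp hA.isHermitian))
  refine ⟨hsymm, fun x hx ↦ ?_⟩
  have hpos := hA.2 (x := x.mapRange f f.map_zero)
    ((Finsupp.mapRange_injective f f.map_zero hf.injective).ne_iff' (by simp) |>.mpr hx)
  rw [← hf.lt_iff_lt, f.map_zero]
  simpa [Finsupp.sum_mapRange_index, map_finsuppSum] using hpos

theorem map_comp_dotProduct_map_mulVec [Fintype n] [Semiring R] [Semiring S] (f : R →+* S)
    (A : Matrix n n R) (x : n → R) :
    (f ∘ x) ⬝ᵥ A.map f *ᵥ (f ∘ x) = f (x ⬝ᵥ A *ᵥ x) := by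
  rw [f.map_dotProduct, ← funext (f.map_mulVec A x), Function.comp_def f (A *ᵥ x)]

theorem add_dotProduct_mulVec_add [Fintype n] [CommSemiring R] {A : Matrix n n R} (hA : A.IsSymm)
    (x y : n → R) :
    (x + y) ⬝ᵥ A *ᵥ (x + y) = x ⬝ᵥ A *ᵥ x + 2 * (A *ᵥ x ⬝ᵥ y) + y ⬝ᵥ A *ᵥ y := by
  have hxy : x ⬝ᵥ A *ᵥ y = A *ᵥ x ⬝ᵥ y := by
    rw [← dotProduct_transpose_mulVec, hA.eq, dotProduct_comm]
  rw [mulVec_add, add_dotProduct, dotProduct_add, dotProduct_add, hxy,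
    dotProduct_comm y (A *ᵥ x)]
  ring

theorem two_mul_dotProduct_add_dotProduct_mulVec_le [Fintype n] [DecidableEq n] [CommRing R]
    [PartialOrder R] [IsOrderedAddMonoid R] [StarRing R] [TrivialStar R] {A : Matrix n n R}
    (hA : (-A).PosSemidef) (hunit : IsUnit A) (c x : n → R) :
    2 * (c ⬝ᵥ x) + x ⬝ᵥ A *ᵥ x ≤ -(c ⬝ᵥ A⁻¹ *ᵥ c) := by
  have hsymm : A.IsSymm := isSymm_neg_iff.mp (isHermitian_iff_isSymm.mp hA.isHermitian)
  set k := A⁻¹ *ᵥ c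
  have hk : A *ᵥ k = c := by
    rw [mulVec_mulVec, mul_nonsing_inv _ ((isUnit_iff_isUnit_det A).mp hunit), one_mulVec]
  have hnonpos : (k + x) ⬝ᵥ A *ᵥ (k + x) ≤ 0 := by
    have h := hA.dotProduct_mulVec_nonneg (k + x)
    rwa [star_trivial, neg_mulVec, dotProduct_neg, neg_nonneg] at h
  rw [add_dotProduct_mulVec_add hsymm, hk, dotProduct_comm k c, add_assoc] at hnonpos
  exact le_neg_iff_add_nonpos_left.mpr hnonpos

end SymmetricForm

theorem negK2_ge_four_pa_sub_three_general {n K : Type*} [Fintype n] [DecidableEq n] [Field K]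
    [LinearOrder K] [IsStrictOrderedRing K] [StarRing K] [TrivialStar K] {M : Matrix n n ℤ}
    (hM : (-M.map (Int.cast : ℤ → K)).PosDef) (c : n → K) {d : n → ℤ} (hd : d ≠ 0) :
    2 * ((d ⬝ᵥ M *ᵥ d : ℤ) : K) + 2 * (c ⬝ᵥ Int.cast ∘ d) + 1 ≤
      -(c ⬝ᵥ (M.map (Int.cast : ℤ → K))⁻¹ *ᵥ c) := by
  have hMint : (-M).PosDef :=
    posDef_of_posDef_map (f := Int.castRingHom K) Int.cast_strictMono
      (by rwa [Matrix.map_neg _ (map_neg _)])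
  have hsq : d ⬝ᵥ M *ᵥ d + 1 ≤ 0 := by
    simpa [neg_mulVec] using hMint.dotProduct_mulVec_pos hd
  have hsqK : ((d ⬝ᵥ M *ᵥ d : ℤ) : K) + 1 ≤ 0 := by exact_mod_cast hsq
  have hcast : (Int.cast ∘ d : n → K) ⬝ᵥ M.map (Int.cast : ℤ → K) *ᵥ (Int.cast ∘ d) =
      ((d ⬝ᵥ M *ᵥ d : ℤ) : K) :=
    map_comp_dotProduct_map_mulVec (Int.castRingHom K) M d
  have hle := two_mul_dotProduct_add_dotProduct_mulVec_le hM.posSemidef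
    ((IsUnit.neg_iff _).mp hM.isUnit) c (Int.cast ∘ d)
  rw [hcast] at hle
  linarith

namespace ResolutionDatum

variable {r : ℕ} (D : ResolutionDatum r)

theorem posDef_neg_map_real : (-D.M.map (Int.cast : ℤ → ℝ)).PosDef := by
  refine .of_dotProduct_mulVec_pos (isHermitian_iff_isSymm.mpr (D.symm.map _).neg) fun x hx ↦ ?_
  rw [star_trivial, neg_mulVec, dotProduct_neg, neg_pos]
  exact D.negdef x hx

theorem posDef_neg_map_rat : (-D.M.map (Int.cast : ℤ → ℚ)).PosDef := by
  refine posDef_of_posDef_map (f := Rat.castHom ℝ) Rat.cast_strictMono ?_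
  convert D.posDef_neg_map_real using 1
  ext i j
  simp

theorem c_dotProduct_intCast_comp (d : Fin r → ℤ) :
    D.c ⬝ᵥ (Int.cast ∘ d) = ((D.cInt ⬝ᵥ d : ℤ) : ℚ) := by
  simp [dotProduct, c, cInt]

end ResolutionDatum

/-- **Theorem 3.4.** `-K² ≥ 4 p_a(D) - 3` for every nonzero effective cycle `D`, i.e.
`-cᵀ M⁻¹ c ≥ 2 dᵀ M d + 2 cᵀ d + 1`. -/
theorem negK2_ge_four_pa_sub_three (r : ℕ) (hr : 0 < r) (D : ResolutionDatum r)
    (d : Fin r → ℤ) (hdne : d ≠ 0) (hdnonneg : ∀ i, 0 ≤ d i) :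
    ((2 * (d ⬝ᵥ (D.M *ᵥ d)) + 2 * (D.cInt ⬝ᵥ d) + 1 : ℤ) : ℚ) ≤ D.negK2 := by
  simpa [ResolutionDatum.negK2, D.c_dotProduct_intCast_comp] using
    negK2_ge_four_pa_sub_three_general D.posDef_neg_map_rat D.c hdne
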